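/- The revenue function Rev(x) = x·(1 − F(x)) satisfies Rev(x) = x for x ∈ [0, b), Rev(x) = b + (1 − b)·g((x − b)/(1 − b)) for x ∈ [b, 1], Rev(x) = 1 + b − x for x ∈ (1, 1 + b], and Rev(x) = 0 for x > 1 + b. Moreover Rev(x) ≥ b for every x ∈ [b, 1], Rev(y) < b for every y ∈ [0, ∞) \ [b, 1], and Rev has a unique maximizer on [0, ∞), namely x_r* = b + (1 − b)·x*, where x* is the unique point in ∩_{k≥0} [a_k, b_k]. -/

import Mathlib

open Set MeasureTheory

/-- The basic mollifier `u₀(x) = exp(−1/(x(1/3 − x)))` on `(0, 1/3)`, `0` elsewhere. -/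
noncomputable def u0 (x : ℝ) : ℝ :=
  if x ∈ Set.Ioo (0 : ℝ) (1 / 3) then Real.exp (-(1 / (x * (1 / 3 - x)))) else 0

/-- The normalized primitive `u(x) = (∫₀^{1/3} u₀)⁻¹ · ∫_{−∞}^x u₀`. -/
noncomputable def uFn (x : ℝ) : ℝ :=
  (∫ t in (0 : ℝ)..(1 / 3), u0 t)⁻¹ * ∫ t in Set.Iic x, u0 t

/-- `L₁ = sup_x |u'(x)|`. -/
noncomputable def L1 : ℝ := ⨆ x : ℝ, |deriv uFn x|

/-- The bump function `B`. -/
noncomputable def bump (x : ℝ) : ℝ :=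
  if x < 0 then 0
  else if x ≤ 1 / 3 then uFn x
  else if x < 2 / 3 then 1
  else if x ≤ 1 then uFn (1 - x)
  else 0

/-- The bump function rescaled to the interval `[a, b]`. -/
noncomputable def bumpOn (a b x : ℝ) : ℝ := bump ((x - a) / (b - a))

/-- The interval widths: `w 0 = 1` and `w k = 3^(−k!)` for `k ≥ 1`. -/
noncomputable def wSeq : ℕ → ℝ := fun k => if k = 0 then 1 else (3 : ℝ) ^ (-(k.factorial : ℤ))

/-- `a, b : ℕ → ℝ` describe an admissible nested sequence of intervals:
`[a₀,b₀] = [0,1]` and `[a_{k+1}, b_{k+1}]` is a subinterval of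
`[a_k + w_k/3, b_k − w_k/3]` of length `w_{k+1}`. -/
def IsNestedTower (a b : ℕ → ℝ) : Prop :=
  a 0 = 0 ∧ b 0 = 1 ∧
  ∀ k : ℕ, a k + wSeq k / 3 ≤ a (k + 1) ∧ b (k + 1) ≤ b k - wSeq k / 3 ∧
    b (k + 1) - a (k + 1) = wSeq (k + 1)

/-- The bump tower `f(x) = c_f·Σ_{k=0}^∞ w_k^m·B_{[a_k,b_k]}(x)`. -/
noncomputable def towerFn (m : ℕ) (cf : ℝ) (a b : ℕ → ℝ) (x : ℝ) : ℝ :=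
  cf * ∑' k : ℕ, wSeq k ^ m * bumpOn (a k) (b k) x

/-- `g = f/(1+f)`, the normalization of a nonnegative function `f` to `[0,1)`. -/
noncomputable def gFn (f : ℝ → ℝ) (x : ℝ) : ℝ := f x / (1 + f x)

/-- The noise distribution function built from `f` with parameter `β`. -/
noncomputable def cdfF (f : ℝ → ℝ) (β : ℝ) (x : ℝ) : ℝ :=
  if x < β then 0
  else if x ≤ 1 then 1 - β / x - (1 - β) / x * gFn f ((x - β) / (1 - β))
  else if x ≤ 1 + β then 2 - (1 + β) / x
  else 1

lemma u0_nonneg (x : ℝ) : 0 ≤ u0 x := by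
  unfold u0; split_ifs
  · exact (Real.exp_pos _).le
  · exact le_rfl

lemma u0_le_one (x : ℝ) : u0 x ≤ 1 := by
  unfold u0; split_ifs with h
  · rw [Real.exp_le_one_iff]
    have h1 := h.1
    have h2 : 0 < 1 / 3 - x := by linarith [h.2]
    have : 0 < 1 / (x * (1 / 3 - x)) := by positivity
    linarith
  · exact zero_le_one

lemma u0_eq_ind : u0 = Set.indicator (Set.Ioo (0 : ℝ) (1 / 3))
    (fun x => Real.exp (-(1 / (x * (1 / 3 - x))))) := by
  funext x
  simp only [u0, Set.indicator]

lemma u0_meas : Measurable u0 := by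
  rw [u0_eq_ind]
  apply Measurable.indicator _ measurableSet_Ioo
  fun_prop

lemma u0_integrable : Integrable u0 := by
  have h : IntegrableOn u0 (Set.Ioo (0 : ℝ) (1 / 3)) := by
    apply Measure.integrableOn_of_bounded (M := 1)
    · simp
    · exact u0_meas.aestronglyMeasurable
    · filter_upwards with x
      rw [Real.norm_of_nonneg (u0_nonneg x)]
      exact u0_le_one x
  refine (integrableOn_iff_integrable_of_support_subset ?_).1 h
  intro x hx
  by_contra hc
  apply hx
  simp only [u0, if_neg hc]

lemma I_eq : ∫ t in (0 : ℝ)..(1 / 3), u0 t = ∫ t, u0 t := by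
  rw [intervalIntegral.integral_of_le (by norm_num)]
  apply setIntegral_eq_integral_of_forall_compl_eq_zero
  intro x hx
  unfold u0
  rw [if_neg]
  exact fun h => hx ⟨h.1, h.2.le⟩

lemma I_pos : 0 < ∫ t in (0 : ℝ)..(1 / 3), u0 t := by
  apply intervalIntegral.intervalIntegral_pos_of_pos_on u0_integrable.intervalIntegrable
  · intro x hx
    unfold u0
    rw [if_pos hx]
    exact Real.exp_pos _
  · norm_num

lemma uFn_nonneg (x : ℝ) : 0 ≤ uFn x := by
  unfold uFn
  apply mul_nonneg (inv_nonneg.2 I_pos.le)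
  exact integral_nonneg u0_nonneg

lemma uFn_le_one (x : ℝ) : uFn x ≤ 1 := by
  unfold uFn
  rw [inv_mul_le_iff₀ I_pos, mul_one, I_eq]
  exact setIntegral_le_integral u0_integrable (Filter.Eventually.of_forall u0_nonneg)

lemma uFn_third : uFn (1 / 3) = 1 := by
  unfold uFn
  have : ∫ t in Set.Iic (1 / 3 : ℝ), u0 t = ∫ t, u0 t := by
    apply setIntegral_eq_integral_of_forall_compl_eq_zero
    intro x hx
    unfold u0
    rw [if_neg]
    exact fun h => hx h.2.le
  rw [this, ← I_eq]
  exact inv_mul_cancel₀ I_pos.ne'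

lemma bump_nonneg (x : ℝ) : 0 ≤ bump x := by
  unfold bump
  split_ifs <;> first | exact le_rfl | exact zero_le_one | exact uFn_nonneg _

lemma bump_le_one (x : ℝ) : bump x ≤ 1 := by
  unfold bump
  split_ifs <;> first | exact le_rfl | exact zero_le_one | exact uFn_le_one _

lemma bump_mid (x : ℝ) (h1 : 1 / 3 ≤ x) (h2 : x ≤ 2 / 3) : bump x = 1 := by
  unfold bump
  rw [if_neg (by linarith)]
  split_ifs with h3 h4 h5
  · rw [le_antisymm h3 h1, uFn_third]
  · rfl
  · have : x = 2 / 3 := by linarith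
    rw [show 1 - x = 1 / 3 by rw [this]; norm_num, uFn_third]
  · linarith

lemma bump_out (x : ℝ) (h : x < 0 ∨ 1 < x) : bump x = 0 := by
  unfold bump
  rcases h with h | h
  · rw [if_pos h]
  · rw [if_neg (by linarith), if_neg (by linarith), if_neg (by linarith), if_neg (by linarith)]

lemma wSeq_pos (k : ℕ) : 0 < wSeq k := by
  unfold wSeq; split_ifs <;> positivity

lemma wSeq_le (k : ℕ) : wSeq k ≤ (1 / 3 : ℝ) ^ k := by
  unfold wSeq; split_ifs with h
  · simp [h]
  · rw [zpow_neg, zpow_natCast, one_div, inv_pow]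
    apply inv_anti₀ (by positivity)
    exact pow_le_pow_right₀ (by norm_num) (Nat.self_le_factorial k)

lemma wSeq_summable (m : ℕ) (hm : 1 ≤ m) : Summable (fun k => wSeq k ^ m) := by
  apply Summable.of_nonneg_of_le (fun k => pow_nonneg (wSeq_pos k).le m) _
    (summable_geometric_of_lt_one (r := (1 / 3 : ℝ)) (by norm_num) (by norm_num))
  intro k
  have h1 : wSeq k ≤ 1 := (wSeq_le k).trans (pow_le_one₀ (by norm_num) (by norm_num))
  calc wSeq k ^ m ≤ wSeq k := pow_le_of_le_one (wSeq_pos k).le h1 (by omega)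
    _ ≤ _ := wSeq_le k

lemma tower_len {a b : ℕ → ℝ} (hab : IsNestedTower a b) (k : ℕ) : b k - a k = wSeq k := by
  obtain ⟨h0, h1, h⟩ := hab
  cases k with
  | zero => rw [h0, h1]; simp [wSeq]
  | succ k => exact (h k).2.2

lemma term_nonneg (m : ℕ) (a b : ℕ → ℝ) (x : ℝ) (k : ℕ) :
    0 ≤ wSeq k ^ m * bumpOn (a k) (b k) x :=
  mul_nonneg (pow_nonneg (wSeq_pos k).le m) (bump_nonneg _)

lemma term_le (m : ℕ) (a b : ℕ → ℝ) (x : ℝ) (k : ℕ) :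
    wSeq k ^ m * bumpOn (a k) (b k) x ≤ wSeq k ^ m :=
  mul_le_of_le_one_right (pow_nonneg (wSeq_pos k).le m) (bump_le_one _)

lemma tower_nonneg (m : ℕ) (cf : ℝ) (hcf : 0 < cf) (a b : ℕ → ℝ) (x : ℝ) :
    0 ≤ towerFn m cf a b x :=
  mul_nonneg hcf.le (tsum_nonneg (term_nonneg m a b x))

lemma tower_star (m : ℕ) (cf : ℝ) (a b : ℕ → ℝ) (hab : IsNestedTower a b) (x : ℝ)
    (hx : ∀ k, x ∈ Set.Icc (a k) (b k)) : towerFn m cf a b x = cf * ∑' k, wSeq k ^ m := by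
  unfold towerFn
  congr 2
  funext k
  have hw := wSeq_pos k
  have hl := tower_len hab k
  obtain ⟨h1, h2, -⟩ := hab.2.2 k
  obtain ⟨h3, h4⟩ := hx (k + 1)
  have : bumpOn (a k) (b k) x = 1 := by
    unfold bumpOn
    rw [hl]
    apply bump_mid
    · rw [le_div_iff₀ hw]; linarith
    · rw [div_le_iff₀ hw]; linarith
  rw [this, mul_one]

lemma tower_lt (m : ℕ) (hm : 1 ≤ m) (cf : ℝ) (hcf : 0 < cf) (a b : ℕ → ℝ)
    (hab : IsNestedTower a b) (x : ℝ)
    (hx : ∃ k, x ∉ Set.Icc (a k) (b k)) : towerFn m cf a b x < cf * ∑' k, wSeq k ^ m := by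
  unfold towerFn
  apply mul_lt_mul_of_pos_left _ hcf
  obtain ⟨k, hk⟩ := hx
  have hs := wSeq_summable m hm
  apply Summable.tsum_lt_tsum (i := k) (term_le m a b x) _
    (Summable.of_nonneg_of_le (term_nonneg m a b x) (term_le m a b x) hs) hs
  have hw := wSeq_pos k
  have hl := tower_len hab k
  have : bumpOn (a k) (b k) x = 0 := by
    unfold bumpOn
    rw [hl]
    apply bump_out
    rw [Set.mem_Icc, not_and_or, not_le, not_le] at hk
    rcases hk with hk | hk
    · left; exact div_neg_of_neg_of_pos (by linarith) hw
    · right; rw [lt_div_iff₀ hw]; linarith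
  rw [this, mul_zero]
  positivity

/-- The revenue function `Rev(x) = x(1 − F(x))` of the constructed distribution:
its piecewise form, the fact that it is at least `b` exactly on `[b,1]`, and the
uniqueness of its maximizer `x_r* = b + (1 − b)·x*` over `[0,∞)`, where `x*` is the
unique point of `⋂_k [a_k, b_k]`. -/
theorem revenue_of_cdfF (m : ℕ) (hm : 1 ≤ m) (cf : ℝ) (hcf : 0 < cf) (hcf' : cf < 1 / L1)
    (a b : ℕ → ℝ) (hab : IsNestedTower a b)
    (β : ℝ) (hβ : β = (1 + cf * L1) / 2)
    (Rev : ℝ → ℝ) (hRev : Rev = fun x => x * (1 - cdfF (towerFn m cf a b) β x))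
    (xstar : ℝ) (hxstar : (⋂ k : ℕ, Set.Icc (a k) (b k)) = {xstar}) :
    (∀ x ∈ Set.Ico (0 : ℝ) β, Rev x = x) ∧
    (∀ x ∈ Set.Icc β 1, Rev x = β + (1 - β) * gFn (towerFn m cf a b) ((x - β) / (1 - β))) ∧
    (∀ x ∈ Set.Ioc (1 : ℝ) (1 + β), Rev x = 1 + β - x) ∧
    (∀ x : ℝ, 1 + β < x → Rev x = 0) ∧
    (∀ x ∈ Set.Icc β 1, β ≤ Rev x) ∧
    (∀ y : ℝ, 0 ≤ y → y ∉ Set.Icc β 1 → Rev y < β) ∧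
    (∀ y : ℝ, 0 ≤ y → y ≠ β + (1 - β) * xstar → Rev y < Rev (β + (1 - β) * xstar)) := by
  have hL : 0 < L1 := by
    have : 0 < 1 / L1 := hcf.trans hcf'
    exact one_div_pos.1 this
  have hcl : cf * L1 < 1 := by rwa [lt_div_iff₀ hL] at hcf'
  have hcl0 : 0 < cf * L1 := mul_pos hcf hL
  have hβ0 : 0 < β := by linarith
  have hβ1 : 0 < 1 - β := by linarith
  have hf0 := tower_nonneg m cf hcf a b
  have P1 : ∀ x ∈ Set.Ico (0 : ℝ) β, Rev x = x := by
    intro x hx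
    simp only [hRev, cdfF]
    rw [if_pos hx.2]; ring
  have P2 : ∀ x ∈ Set.Icc β 1,
      Rev x = β + (1 - β) * gFn (towerFn m cf a b) ((x - β) / (1 - β)) := by
    intro x hx
    simp only [hRev, cdfF]
    rw [if_neg (not_lt.2 hx.1), if_pos hx.2]
    have hx0 : x ≠ 0 := (hβ0.trans_le hx.1).ne'
    generalize gFn (towerFn m cf a b) ((x - β) / (1 - β)) = G
    field_simp
    ring
  have P3 : ∀ x ∈ Set.Ioc (1 : ℝ) (1 + β), Rev x = 1 + β - x := by
    intro x hx
    simp only [hRev, cdfF]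
    have h1 := hx.1
    rw [if_neg (by linarith), if_neg (by linarith), if_pos hx.2]
    have hx0 : x ≠ 0 := by linarith
    field_simp
    ring
  have P4 : ∀ x : ℝ, 1 + β < x → Rev x = 0 := by
    intro x hx
    simp only [hRev, cdfF]
    rw [if_neg (by linarith), if_neg (by linarith), if_neg (by linarith)]
    ring
  have P5 : ∀ x ∈ Set.Icc β 1, β ≤ Rev x := by
    intro x hx
    rw [P2 x hx]
    have h := hf0 ((x - β) / (1 - β))
    have : 0 ≤ gFn (towerFn m cf a b) ((x - β) / (1 - β)) := by
      unfold gFn; positivity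
    have := mul_nonneg hβ1.le this
    linarith
  have P6 : ∀ y : ℝ, 0 ≤ y → y ∉ Set.Icc β 1 → Rev y < β := by
    intro y hy hy'
    rw [Set.mem_Icc, not_and_or, not_le, not_le] at hy'
    rcases lt_or_ge y β with h | h
    · rw [P1 y ⟨hy, h⟩]; exact h
    · have h1 : 1 < y := hy'.resolve_left (not_lt.2 h)
      rcases le_or_gt y (1 + β) with h2 | h2
      · rw [P3 y ⟨h1, h2⟩]; linarith
      · rw [P4 y h2]; exact hβ0
  refine ⟨P1, P2, P3, P4, P5, P6, ?_⟩
  intro y hy hne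
  have hxs : ∀ k, xstar ∈ Set.Icc (a k) (b k) := by
    have : xstar ∈ (⋂ k : ℕ, Set.Icc (a k) (b k)) := by rw [hxstar]; rfl
    exact Set.mem_iInter.1 this
  have hx0 := hxs 0
  rw [hab.1, hab.2.1] at hx0
  have hxr : β + (1 - β) * xstar ∈ Set.Icc β 1 := by
    constructor
    · nlinarith [mul_nonneg hβ1.le hx0.1]
    · nlinarith [mul_nonneg hβ1.le (sub_nonneg.2 hx0.2)]
  by_cases hym : y ∈ Set.Icc β 1
  · rw [P2 y hym, P2 _ hxr]
    have e : (β + (1 - β) * xstar - β) / (1 - β) = xstar := by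
      field_simp
      ring
    rw [e]
    have hz : ∃ k, (y - β) / (1 - β) ∉ Set.Icc (a k) (b k) := by
      by_contra hc
      push Not at hc
      have : (y - β) / (1 - β) ∈ (⋂ k : ℕ, Set.Icc (a k) (b k)) := Set.mem_iInter.2 hc
      rw [hxstar, Set.mem_singleton_iff, div_eq_iff hβ1.ne'] at this
      apply hne
      linarith
    have hlt := tower_lt m hm cf hcf a b hab _ hz
    rw [← tower_star m cf a b hab xstar hxs] at hlt
    have h1 := hf0 ((y - β) / (1 - β))
    have h2 := hf0 xstar
    have : gFn (towerFn m cf a b) ((y - β) / (1 - β)) < gFn (towerFn m cf a b) xstar := by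
      unfold gFn
      rw [div_lt_div_iff₀ (by linarith) (by linarith)]
      linarith
    have := mul_lt_mul_of_pos_left this hβ1
    linarith
  · exact (P6 y hy hym).trans_le (P5 _ hxr)
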